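/- If X is weird and X ⊆ ∏_{j<n} Z_j with n finite and each Z_j compact Hausdorff, then some Z_j has a weird subspace. -/

import Mathlib

/-- A space is scattered iff every nonempty subset has a point isolated in it. -/
def ScatteredSpace (X : Type*) [TopologicalSpace X] : Prop :=
  ∀ S : Set X, S.Nonempty → ∃ x ∈ S, ∃ U : Set X, IsOpen U ∧ U ∩ S = {x}

/-- A space is weird iff it is compact Hausdorff, not scattered, and no subset
is simultaneously perfect (closed, nonempty, no isolated points) and totally
disconnected. -/
def Weird (X : Type*) [TopologicalSpace X] : Prop :=
  CompactSpace X ∧ T2Space X ∧ ¬ ScatteredSpace X ∧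
    ∀ P : Set X, Perfect P → P.Nonempty → ¬ IsTotallyDisconnected P

/-!
A compact Hausdorff space is weird iff it is not scattered but all of its closed totally
disconnected subspaces are. Two facts about scattered spaces drive the proof: scatteredness passes
to Hausdorff images of compact spaces, and a space mapping continuously to a scattered space with
scattered fibres is scattered. Hence, if `W` is compact and not scattered, and `f : W → Z` where
`Z` has no weird subspace, some closed non-scattered `L ⊆ W` has totally disconnected image: the
preimage of a closed totally disconnected non-scattered subset of `f(W)`, or a fibre of `f`. Doing
this for finitely many coordinates in turn yields a closed non-scattered subset of `X` all of whose
coordinate projections are totally disconnected, so that it is totally disconnected itself.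
-/

open Filter Set Topology

universe u

section TotallyDisconnected

variable {X Y : Type*} [TopologicalSpace X] [TopologicalSpace Y]

theorem isTotallyDisconnected_mono {S T : Set X} (hST : S ⊆ T) (hT : IsTotallyDisconnected T) :
    IsTotallyDisconnected S :=
  fun A hA => hT A (hA.trans hST)

theorem isTotallyDisconnected_of_image_of_fibers {f : X → Y} {S : Set X} (hf : ContinuousOn f S)
    (himage : IsTotallyDisconnected (f '' S))
    (hfiber : ∀ y, IsTotallyDisconnected (S ∩ f ⁻¹' {y})) : IsTotallyDisconnected S := by
  intro A hAS hA x hx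
  have hconst : A ⊆ f ⁻¹' {f x} := fun y hy =>
    himage _ (image_mono hAS) (hA.image f (hf.mono hAS)) (mem_image_of_mem f hy)
      (mem_image_of_mem f hx)
  exact fun y hy => hfiber (f x) A (subset_inter hAS hconst) hA hx hy

theorem isTotallyDisconnected_of_forall_eval_image {ι : Type*} {Z : ι → Type*}
    [∀ j, TopologicalSpace (Z j)] {S : Set (∀ j, Z j)}
    (hS : ∀ j, IsTotallyDisconnected (Function.eval j '' S)) : IsTotallyDisconnected S :=
  fun _ hAS hA _ hx _ hy => funext fun j =>
    hS j _ (image_mono hAS) (hA.image _ (continuous_apply j).continuousOn)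
      (mem_image_of_mem _ hx) (mem_image_of_mem _ hy)

end TotallyDisconnected

section Perfect

variable {X Y : Type*} [TopologicalSpace X] [TopologicalSpace Y]

theorem accPt_principal_iff_forall_isOpen_inter_ne {S : Set X} {x : X} (hx : x ∈ S) :
    AccPt x (𝓟 S) ↔ ∀ U, IsOpen U → U ∩ S ≠ {x} := by
  rw [accPt_iff_nhds]
  constructor
  · intro hacc U hU hUS
    have hxU : x ∈ U := (hUS.ge rfl).1
    obtain ⟨y, hy, hyx⟩ := hacc U (hU.mem_nhds hxU)
    exact hyx (hUS.le hy)
  · intro hS N hN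
    obtain ⟨U, hUN, hU, hxU⟩ := mem_nhds_iff.1 hN
    by_contra! hNS
    refine hS U hU (Subset.antisymm (fun y hy => hNS y ⟨hUN hy.1, hy.2⟩) ?_)
    exact singleton_subset_iff.2 ⟨hxU, hx⟩

theorem preperfect_iff_perfectSpace_coe {S : Set X} : Preperfect S ↔ PerfectSpace S := by
  simp only [perfectSpace_iff_forall_not_isolated, Preperfect, Subtype.forall]
  refine forall₂_congr fun x hx => ?_
  have hcompl : ({⟨x, hx⟩}ᶜ : Set S) = Subtype.val ⁻¹' {x}ᶜ := by
    ext y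
    simp only [mem_compl_iff, mem_singleton_iff, mem_preimage, Subtype.ext_iff]
  rw [AccPt, neBot_iff, neBot_iff, hcompl, ne_eq, ne_eq, nhdsWithin_subtype_eq_bot_iff]

theorem preperfect_image {f : X → Y} (hf : Continuous f) (hinj : Function.Injective f)
    {S : Set X} (hS : Preperfect S) : Preperfect (f '' S) := by
  rintro _ ⟨x, hx, rfl⟩
  simpa only [map_principal] using (hS x hx).map hf.continuousAt hinj

end Perfect

section Scattered

variable {X Y : Type*} [TopologicalSpace X] [TopologicalSpace Y]

theorem scatteredSpace_iff_forall_preperfect :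
    ScatteredSpace X ↔ ∀ S : Set X, Preperfect S → S = ∅ := by
  refine forall_congr' fun S => ?_
  have hisolated : (∃ x ∈ S, ∃ U, IsOpen U ∧ U ∩ S = {x}) ↔ ¬ Preperfect S := by
    simp only [Preperfect, not_forall, exists_prop]
    refine exists_congr fun x => and_congr_right fun hx => ?_
    simp only [accPt_principal_iff_forall_isOpen_inter_ne hx, ne_eq, not_forall, not_not,
      exists_prop]
  rw [hisolated, nonempty_iff_ne_empty]
  exact not_imp_not

theorem scatteredSpace_iff_forall_perfect :
    ScatteredSpace X ↔ ∀ P : Set X, Perfect P → P = ∅ := by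
  rw [scatteredSpace_iff_forall_preperfect]
  exact ⟨fun h P hP => h P hP.acc, fun h S hS => (closure_empty_iff S).1 (h _ hS.perfect_closure)⟩

theorem ScatteredSpace.of_injective {f : X → Y} (hf : Continuous f) (hinj : Function.Injective f)
    (hY : ScatteredSpace Y) : ScatteredSpace X := by
  rw [scatteredSpace_iff_forall_preperfect] at hY ⊢
  exact fun S hS => image_eq_empty.1 (hY _ (preperfect_image hf hinj hS))

theorem scatteredSpace_coe_iff_forall_preperfect {T : Set X} :
    ScatteredSpace T ↔ ∀ S ⊆ T, Preperfect S → S = ∅ := by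
  constructor
  · intro hT S hST hS
    have : PerfectSpace S := preperfect_iff_perfectSpace_coe.1 hS
    have hscattered : ScatteredSpace S :=
      hT.of_injective (continuous_inclusion hST) (inclusion_injective hST)
    have huniv : (univ : Set S) = ∅ :=
      scatteredSpace_iff_forall_preperfect.1 hscattered univ PerfectSpace.univ_preperfect
    exact isEmpty_coe_sort.1 (univ_eq_empty_iff.1 huniv)
  · intro h
    rw [scatteredSpace_iff_forall_preperfect]
    intro S hS
    exact image_eq_empty.1 (h _ (Subtype.coe_image_subset T S)
      (preperfect_image continuous_subtype_val Subtype.val_injective hS))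

theorem ScatteredSpace.of_fibers {f : X → Y} (hf : Continuous f) (hY : ScatteredSpace Y)
    (hfiber : ∀ y, ScatteredSpace (f ⁻¹' {y})) : ScatteredSpace X := by
  rw [scatteredSpace_iff_forall_preperfect]
  intro S hS
  by_contra! hne
  obtain ⟨_, ⟨x, hx, rfl⟩, V, hV, hVS⟩ := hY (f '' S) (hne.image f)
  have hsub : f ⁻¹' V ∩ S ⊆ f ⁻¹' {f x} := fun w hw => hVS.le ⟨hw.1, mem_image_of_mem f hw.2⟩
  have hempty : f ⁻¹' V ∩ S = ∅ :=
    scatteredSpace_coe_iff_forall_preperfect.1 (hfiber (f x)) _ hsub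
      (hS.open_inter (hV.preimage hf))
  have hxV : f x ∈ V := (hVS.ge rfl).1
  exact hempty.le ⟨hxV, hx⟩

end Scattered

section CompactImage

variable {X Y : Type u} [TopologicalSpace X] [CompactSpace X] [TopologicalSpace Y] [T2Space Y]

-- An isolated point of a minimal closed subset of `X` mapping onto `Y` has isolated image: by
-- minimality the rest of the subset has a closed image that misses only this point.
theorem ScatteredSpace.exists_isOpen_singleton_of_surjective [Nonempty Y] (hX : ScatteredSpace X)
    {f : X → Y} (hf : Continuous f) (hsurj : f.Surjective) : ∃ y : Y, IsOpen {y} := by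
  obtain ⟨E, hEcompact, hEonto, hEmin⟩ := exists_compact_surjective_zorn_subset hf hsurj
  obtain ⟨x, hxE, U, hU, hUE⟩ := hX E (image_nonempty.1 (hEonto ▸ univ_nonempty))
  set R : Set E := (Subtype.val ⁻¹' U)ᶜ
  have hRclosed : IsClosed R := (hU.preimage continuous_subtype_val).isClosed_compl
  have hRne : R ≠ univ :=
    (ne_univ_iff_exists_notMem R).2 ⟨⟨x, hxE⟩, fun h => h (hUE.ge rfl).1⟩
  have himage : IsOpen (E.domRestrict f '' R)ᶜ :=
    (hRclosed.isCompact.image hf.continuousOn.domRestrict).isClosed.isOpen_compl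
  have hmissed : (E.domRestrict f '' R)ᶜ ⊆ {f x} := by
    intro y hy
    obtain ⟨w, hw, rfl⟩ : y ∈ f '' E := hEonto.ge (mem_univ y)
    have hwU : w ∈ U := by
      by_contra h
      exact hy ⟨⟨w, hw⟩, h, rfl⟩
    exact congrArg f (hUE.le ⟨hwU, hw⟩)
  have hnonempty : (E.domRestrict f '' R)ᶜ.Nonempty := nonempty_compl.2 (hEmin R hRne hRclosed)
  exact ⟨f x, hnonempty.subset_singleton_iff.1 hmissed ▸ himage⟩

theorem ScatteredSpace.of_surjective (hX : ScatteredSpace X) {f : X → Y} (hf : Continuous f)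
    (hsurj : f.Surjective) : ScatteredSpace Y := by
  rw [scatteredSpace_iff_forall_perfect]
  intro P hP
  by_contra! hne
  have : Nonempty P := hne.to_subtype
  have : PerfectSpace P := preperfect_iff_perfectSpace_coe.1 hP.acc
  have : CompactSpace (f ⁻¹' P) := isCompact_iff_compactSpace.1 (hP.closed.preimage hf).isCompact
  have hpreimage : ScatteredSpace (f ⁻¹' P) :=
    hX.of_injective continuous_subtype_val Subtype.val_injective
  obtain ⟨y, hy⟩ := hpreimage.exists_isOpen_singleton_of_surjective
    (hf.restrictPreimage (s := P)) (hsurj.restrictPreimage P)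
  exact not_isOpen_singleton y hy

end CompactImage

theorem weird_iff_forall_isClosed_scatteredSpace {X : Type*} [TopologicalSpace X] :
    Weird X ↔ CompactSpace X ∧ T2Space X ∧ ¬ ScatteredSpace X ∧
      ∀ C : Set X, IsClosed C → IsTotallyDisconnected C → ScatteredSpace C := by
  refine and_congr_right fun _ => and_congr_right fun _ => and_congr_right fun _ => ?_
  constructor
  · intro h C hC hCtd
    rw [scatteredSpace_coe_iff_forall_preperfect]
    intro S hSC hS
    by_contra! hne
    exact h (closure S) hS.perfect_closure hne.closure
      (isTotallyDisconnected_mono (closure_minimal hSC hC) hCtd)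
  · intro h P hP hne hPtd
    exact hne.ne_empty (scatteredSpace_coe_iff_forall_preperfect.1 (h P hP.closed hPtd) P
      Subset.rfl hP.acc)

theorem exists_isClosed_not_scatteredSpace_isTotallyDisconnected_image {W Z : Type u}
    [TopologicalSpace W] [CompactSpace W] [TopologicalSpace Z] [T2Space Z]
    (hW : ¬ ScatteredSpace W) {f : W → Z} (hf : Continuous f) (hrange : ¬ Weird (range f)) :
    ∃ L : Set W, IsClosed L ∧ ¬ ScatteredSpace L ∧ IsTotallyDisconnected (f '' L) := by
  by_cases hs : ScatteredSpace (range f)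
  · obtain ⟨z, hz⟩ : ∃ z, ¬ ScatteredSpace (rangeFactorization f ⁻¹' {z}) := by
      by_contra! h
      exact hW (hs.of_fibers hf.rangeFactorization h)
    refine ⟨_, isClosed_singleton.preimage hf.rangeFactorization, hz, ?_⟩
    refine isTotallyDisconnected_mono ?_ (isTotallyDisconnected_singleton (x := z.1))
    exact image_subset_iff.2 fun w hw => congrArg Subtype.val hw
  · rw [weird_iff_forall_isClosed_scatteredSpace] at hrange
    push Not at hrange
    obtain ⟨C, hC, hCtd, hCns⟩ :=
      hrange (isCompact_iff_compactSpace.1 (isCompact_range hf)) inferInstance hs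
    have hL : IsClosed (rangeFactorization f ⁻¹' C) := hC.preimage hf.rangeFactorization
    have : CompactSpace (rangeFactorization f ⁻¹' C) := isCompact_iff_compactSpace.1 hL.isCompact
    refine ⟨_, hL, fun h => hCns ?_, ?_⟩
    · exact h.of_surjective hf.rangeFactorization.restrictPreimage
        (rangeFactorization_surjective.restrictPreimage C)
    · have hCimage : IsTotallyDisconnected (Subtype.val '' C) :=
        IsEmbedding.subtypeVal.isTotallyDisconnected_image.2 hCtd
      refine isTotallyDisconnected_mono ?_ hCimage
      exact image_subset_iff.2 fun w hw => mem_image_of_mem Subtype.val hw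

theorem exists_isClosed_not_scatteredSpace_forall_isTotallyDisconnected_image {ι : Type*}
    {X : Type u} [TopologicalSpace X] [CompactSpace X] (hX : ¬ ScatteredSpace X)
    {Z : ι → Type u} [∀ j, TopologicalSpace (Z j)] [∀ j, T2Space (Z j)]
    (hZ : ∀ j, ∀ S : Set (Z j), ¬ Weird S) {f : ∀ j, X → Z j} (hf : ∀ j, Continuous (f j))
    (s : Finset ι) :
    ∃ K : Set X, IsClosed K ∧ ¬ ScatteredSpace K ∧ ∀ j ∈ s, IsTotallyDisconnected (f j '' K) := by
  classical
  induction s using Finset.induction_on with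
  | empty =>
    let e : X ≃ₜ (univ : Set X) := (Homeomorph.Set.univ X).symm
    exact ⟨univ, isClosed_univ, fun h => hX (h.of_injective e.continuous e.injective), by simp⟩
  | insert i s _ ih =>
    obtain ⟨K, hK, hKns, hKtd⟩ := ih
    have : CompactSpace K := isCompact_iff_compactSpace.1 hK.isCompact
    obtain ⟨L, hL, hLns, hLtd⟩ := exists_isClosed_not_scatteredSpace_isTotallyDisconnected_image
      hKns ((hf i).comp continuous_subtype_val) (hZ i _)
    refine ⟨Subtype.val '' L, hK.isClosedMap_subtype_val _ hL, fun h => hLns ?_, ?_⟩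
    · exact h.of_injective (continuous_subtype_val.restrict (mapsTo_image _ L))
        (Subtype.val_injective.injOn.imageFactorization_injective)
    · intro j hj
      obtain rfl | hj := Finset.mem_insert.1 hj
      · rwa [← image_comp]
      · exact isTotallyDisconnected_mono (image_mono (Subtype.coe_image_subset K L)) (hKtd j hj)

theorem stmt7_general {ι : Type*} [Finite ι] {X : Type u} [TopologicalSpace X] (hX : Weird X)
    {Z : ι → Type u} [∀ j, TopologicalSpace (Z j)] [∀ j, T2Space (Z j)] {f : X → ∀ j, Z j}
    (hf : Continuous f) (hlight : ∀ z, IsTotallyDisconnected (f ⁻¹' {z})) :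
    ∃ j, ∃ S : Set (Z j), Weird S := by
  by_contra! hZ
  obtain ⟨_, -, hXns, hXtd⟩ := weird_iff_forall_isClosed_scatteredSpace.1 hX
  have := Fintype.ofFinite ι
  obtain ⟨K, hK, hKns, hKtd⟩ :=
    exists_isClosed_not_scatteredSpace_forall_isTotallyDisconnected_image hXns hZ
      (continuous_pi_iff.1 hf) Finset.univ
  have himage : IsTotallyDisconnected (f '' K) := by
    refine isTotallyDisconnected_of_forall_eval_image fun j => ?_
    rw [← image_comp]
    exact hKtd j (Finset.mem_univ j)
  exact hKns (hXtd K hK (isTotallyDisconnected_of_image_of_fibers hf.continuousOn himage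
    fun z => isTotallyDisconnected_mono inter_subset_right (hlight z)))

theorem stmt7 (n : ℕ) (Z : Fin n → Type*) [∀ j, TopologicalSpace (Z j)]
    [∀ j, CompactSpace (Z j)] [∀ j, T2Space (Z j)]
    (X : Set (∀ j, Z j)) (hX : Weird X) :
    ∃ j, ∃ S : Set (Z j), Weird S :=
  stmt7_general hX continuous_subtype_val fun _ _ hA _ =>
    (subsingleton_singleton.preimage Subtype.val_injective).anti hA
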